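/- Let A ∈ ℝ^{n×n} (n ≥ 3) be PP with maximal growth factor ρ(A) = 2^{n−1}, and let A = QR be its QR factorization with R upper triangular with positive diagonal. Then Q = D Q_n D̃ for some diagonal matrices D, D̃ with diagonal entries ±1, where Q_n = Q̂ D̂^{−1/2}. Moreover ρ(Q) = ρ(Q_n). -/

import Mathlib

open Matrix Filter

/-- Gaussian-elimination intermediate entry `A^{(k+1)}_{ij}` (0-indexed step `k`):
the Schur complement of the leading `k × k` block. -/
noncomputable def geEntry {n : ℕ} (A : Matrix (Fin n) (Fin n) ℝ) (k i j : Fin n) : ℝ :=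
  A i j - ∑ a : Fin k.val, ∑ b : Fin k.val,
    A i (Fin.castLE k.isLt.le a) *
      (A.submatrix (Fin.castLE k.isLt.le) (Fin.castLE k.isLt.le))⁻¹ a b *
      A (Fin.castLE k.isLt.le b) j

/-- `A` is PP: at each GE step the pivot dominates its column. -/
def IsPP {n : ℕ} (A : Matrix (Fin n) (Fin n) ℝ) : Prop :=
  ∀ k i : Fin n, k ≤ i → |geEntry A k i k| ≤ |geEntry A k k k|

/-- `A` is CP: at each GE step the pivot dominates the whole untriangularized block. -/
def IsCP {n : ℕ} (A : Matrix (Fin n) (Fin n) ℝ) : Prop :=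
  ∀ k i j : Fin n, k ≤ i → k ≤ j → |geEntry A k i j| ≤ |geEntry A k k k|

/-- Maximal absolute Gaussian-elimination intermediate entry of `A`. -/
noncomputable def maxGE {n : ℕ} (A : Matrix (Fin n) (Fin n) ℝ) : ℝ :=
  ⨆ k : Fin n, ⨆ i : {i : Fin n // k ≤ i}, ⨆ j : {j : Fin n // k ≤ j},
    |geEntry A k i.1 j.1|

/-- `max_{i,j} |A_{ij}|`. -/
noncomputable def maxAbs {n : ℕ} (A : Matrix (Fin n) (Fin n) ℝ) : ℝ :=
  ⨆ i, ⨆ j, |A i j|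

/-- Growth factor `ρ(A)`. -/
noncomputable def growth {n : ℕ} (A : Matrix (Fin n) (Fin n) ℝ) : ℝ :=
  maxGE A / maxAbs A

/-- `P` is a permutation matrix. -/
def IsPermMatrix {n : ℕ} (P : Matrix (Fin n) (Fin n) ℝ) : Prop :=
  ∃ σ : Equiv.Perm (Fin n), P = σ.permMatrix ℝ

/-- `D` is a diagonal matrix with diagonal entries `±1`. -/
def IsSignDiag {n : ℕ} (D : Matrix (Fin n) (Fin n) ℝ) : Prop :=
  (∀ i j, i ≠ j → D i j = 0) ∧ (∀ i, D i i = 1 ∨ D i i = -1)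

/-- Wilkinson's unipotent lower triangular matrix `L_n`. -/
def Lmat (n : ℕ) : Matrix (Fin n) (Fin n) ℝ :=
  fun i j => if i = j then 1 else if j < i then -1 else 0

/-- Wilkinson's upper triangular factor `U_n`. -/
def Umat (n : ℕ) : Matrix (Fin n) (Fin n) ℝ :=
  fun i j => if (j : ℕ) = n - 1 then 2 ^ (i : ℕ) else if i = j then 1 else 0

/-- Wilkinson's worst-case GEPP growth matrix `A_n`. -/
def Amat (n : ℕ) : Matrix (Fin n) (Fin n) ℝ :=
  fun i j =>
    if (j : ℕ) = n - 1 ∧ (i : ℕ) < n - 1 then 1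
    else if i = j then 1
    else if j < i then -1
    else 0

/-- `α_j = 1 + (2/3)(4^{j-1} - 1)` (1-indexed `j`). -/
noncomputable def alpha (j : ℕ) : ℝ := 1 + 2 / 3 * (4 ^ (j - 1) - 1)

/-- The unnormalized orthogonal factor `Q̂` (columns of `Qhat n` are, 1-indexed,
the columns described in the paper; here 0-indexed). -/
noncomputable def Qhat (n : ℕ) : Matrix (Fin n) (Fin n) ℝ :=
  fun i j =>
    if (j : ℕ) = n - 1 then
      if (i : ℕ) = n - 1 then 1 else 2 ^ (n - 2 - (i : ℕ))
    else if (j : ℕ) = n - 2 then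
      if (i : ℕ) = n - 2 then 1 else if (i : ℕ) = n - 1 then -1 else 0
    else if (i : ℕ) < (j : ℕ) then
      -((n : ℝ) - (j : ℕ) - 2) * 2 ^ ((j : ℕ) - (i : ℕ) - 1)
    else if (i : ℕ) = (j : ℕ) then
      ((n : ℝ) - (j : ℕ) - 1) * (alpha ((j : ℕ) + 1) - 1) + 1
    else -alpha ((j : ℕ) + 1)

/-- The diagonal normalization matrix `D̂`. -/
noncomputable def Dhat (n : ℕ) : Matrix (Fin n) (Fin n) ℝ :=
  Matrix.diagonal fun j =>
    if (j : ℕ) = 0 then (n : ℝ)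
    else if (j : ℕ) = n - 2 then 2
    else if (j : ℕ) = n - 1 then 2 * alpha (n - 1)
    else ((n : ℝ) - (j : ℕ) - 1) ^ 2 * (alpha ((j : ℕ) + 1) - 1) ^ 2 *
        (2 * alpha ((j : ℕ) + 1) - 1) / (2 * alpha ((j : ℕ) + 1) - 2) +
      ((n : ℝ) - (j : ℕ) - 1) * (alpha ((j : ℕ) + 1) ^ 2 + alpha ((j : ℕ) + 1) - 1) +
      2 * alpha (j : ℕ)

/-- `Q_n = Q̂ D̂^{-1/2}`, the orthogonal QR factor of `L_n`. -/
noncomputable def Qmat (n : ℕ) : Matrix (Fin n) (Fin n) ℝ :=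
  Qhat n * Matrix.diagonal fun m => (Real.sqrt (Dhat n m m))⁻¹

/-- Frobenius norm. -/
noncomputable def frobNorm {n : ℕ} (M : Matrix (Fin n) (Fin n) ℝ) : ℝ :=
  Real.sqrt (∑ i, ∑ j, M i j ^ 2)

/-- The Givens rotation `G(θ, i, j)`. -/
noncomputable def givens (n : ℕ) (θ : ℝ) (i j : Fin n) : Matrix (Fin n) (Fin n) ℝ :=
  fun a b =>
    if a = i ∧ b = i then Real.cos θ
    else if a = j ∧ b = j then Real.cos θ
    else if a = i ∧ b = j then -Real.sin θ
    else if a = j ∧ b = i then Real.sin θ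
    else if a = b then 1 else 0

/-- The ordered product of Givens rotations `Q(θ) = ∏_{i=1}^{n-1} ∏_{j=i+1}^n G(θ_{ij}, i, j)`. -/
noncomputable def QofTheta (n : ℕ) (θ : Fin n → Fin n → ℝ) : Matrix (Fin n) (Fin n) ℝ :=
  ((List.finRange n).map fun i =>
    (((List.finRange n).filter fun j => decide (i < j)).map fun j =>
      givens n (θ i j) i j).prod).prod

/-- recursive Gaussian elimination on ℕ-indexed arrays -/
noncomputable def gE (a : ℕ → ℕ → ℝ) : ℕ → ℕ → ℕ → ℝ
  | 0 => a
  | k + 1 => fun i j => gE a k i j - gE a k i k / gE a k k k * gE a k k j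

noncomputable def lf (a : ℕ → ℕ → ℝ) (i k : ℕ) : ℝ := gE a k i k / gE a k k k

lemma gE_succ (a : ℕ → ℕ → ℝ) (k i j : ℕ) :
    gE a (k + 1) i j = gE a k i j - lf a i k * gE a k k j := rfl

lemma gE_tel (a : ℕ → ℕ → ℝ) (m i j : ℕ) :
    a i j = gE a m i j + ∑ k ∈ Finset.range m, lf a i k * gE a k k j := by
  induction m with
  | zero => simp [gE]
  | succ m ih => rw [Finset.sum_range_succ, gE_succ, ih]; ring

lemma gE_zero (a : ℕ → ℕ → ℝ) (m : ℕ) (h : ∀ k < m, gE a k k k ≠ 0) :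
    ∀ i j, (i < m ∨ j < m) → gE a m i j = 0 := by
  induction m with
  | zero => intro i j hij; omega
  | succ m ih =>
    have ih' := ih (fun k hk => h k (by omega))
    have hm := h m (by omega)
    intro i j hij
    rw [gE_succ, lf]
    by_cases h1 : i < m
    · rw [ih' i j (Or.inl h1), ih' i m (Or.inl h1)]; simp
    by_cases h2 : j < m
    · rw [ih' i j (Or.inr h2), ih' m j (Or.inr h2)]; simp
    rcases hij with h3 | h3
    · have : i = m := by omega
      subst this
      field_simp; ring
    · have : j = m := by omega
      subst this
      field_simp; ring

/-- extension of a matrix by zero -/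
noncomputable def ext0 {n : ℕ} (A : Matrix (Fin n) (Fin n) ℝ) (i j : ℕ) : ℝ :=
  if h : i < n ∧ j < n then A ⟨i, h.1⟩ ⟨j, h.2⟩ else 0

lemma ext0_fin {n : ℕ} (A : Matrix (Fin n) (Fin n) ℝ) (i j : Fin n) :
    ext0 A i j = A i j := by
  simp [ext0]

lemma geEntry_eq {n : ℕ} (A : Matrix (Fin n) (Fin n) ℝ) (k i j : Fin n)
    (h : ∀ m < k.val, gE (ext0 A) m m m ≠ 0) :
    geEntry A k i j = gE (ext0 A) k i j := by
  set a := ext0 A with ha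
  let L : Matrix (Fin k.val) (Fin k.val) ℝ := fun p q => lf a p q
  let U : Matrix (Fin k.val) (Fin k.val) ℝ := fun p q => gE a p p q
  let l : Fin k.val → ℝ := fun q => lf a i q
  let u : Fin k.val → ℝ := fun q => gE a q q j
  have hU : IsUnit U.det := by
    rw [Matrix.det_of_isUpperTriangular]
    · rw [isUnit_iff_ne_zero, Finset.prod_ne_zero_iff]
      intro p _
      exact h p p.2
    · intro p q hpq
      exact gE_zero a p (fun m hm => h m (by omega)) p q (Or.inr hpq)
  have hL : IsUnit L.det := by
    rw [Matrix.det_of_isLowerTriangular]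
    · rw [isUnit_iff_ne_zero, Finset.prod_ne_zero_iff]
      intro p _
      exact div_ne_zero (h p p.2) (h p p.2)
    · intro p q hpq
      have : (p : ℕ) < q := hpq
      show gE a q p q / _ = 0
      rw [gE_zero a q (fun m hm => h m (by omega)) p q (Or.inl this), zero_div]
  have hM : A.submatrix (Fin.castLE k.isLt.le) (Fin.castLE k.isLt.le) = L * U := by
    ext p q
    rw [Matrix.mul_apply, Matrix.submatrix_apply, ← ext0_fin A, ← ha, gE_tel a k,
      gE_zero a k h _ _ (Or.inl (by simp)), zero_add, Finset.sum_range]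
    rfl
  have hr : (fun b : Fin k.val => A i (Fin.castLE k.isLt.le b)) = l ᵥ* U := by
    ext q
    rw [← ext0_fin A, ← ha, gE_tel a k,
      gE_zero a k h _ _ (Or.inr (by simp)), zero_add, Finset.sum_range]
    rfl
  have hc : (fun b : Fin k.val => A (Fin.castLE k.isLt.le b) j) = L *ᵥ u := by
    ext q
    rw [← ext0_fin A, ← ha, gE_tel a k,
      gE_zero a k h _ _ (Or.inl (by simp)), zero_add, Finset.sum_range]
    rfl
  have hs : ∑ p : Fin k.val, ∑ b : Fin k.val,
    A i (Fin.castLE k.isLt.le p) *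
      (A.submatrix (Fin.castLE k.isLt.le) (Fin.castLE k.isLt.le))⁻¹ p b *
      A (Fin.castLE k.isLt.le b) j = l ⬝ᵥ u := by
    have : ∑ p : Fin k.val, ∑ b : Fin k.val,
      A i (Fin.castLE k.isLt.le p) *
      (A.submatrix (Fin.castLE k.isLt.le) (Fin.castLE k.isLt.le))⁻¹ p b *
      A (Fin.castLE k.isLt.le b) j =
      (fun b : Fin k.val => A i (Fin.castLE k.isLt.le b)) ⬝ᵥ
       ((A.submatrix (Fin.castLE k.isLt.le) (Fin.castLE k.isLt.le))⁻¹ *ᵥ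
        (fun b : Fin k.val => A (Fin.castLE k.isLt.le b) j)) := by
      simp only [dotProduct, Matrix.mulVec, Finset.mul_sum, mul_assoc]
    rw [this, hr, hc, hM, Matrix.mul_inv_rev, Matrix.mulVec_mulVec, Matrix.mul_assoc,
      Matrix.nonsing_inv_mul _ hL, Matrix.mul_one, ← Matrix.dotProduct_mulVec,
      Matrix.mulVec_mulVec, Matrix.mul_nonsing_inv _ hU, Matrix.one_mulVec]
  rw [geEntry, hs, ← ext0_fin A, ← ha, gE_tel a k i j, Finset.sum_range]
  simp [dotProduct, l, u]

/-- For an invertible PP matrix all pivots are nonzero. -/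
lemma pivots_ne {n : ℕ} (A : Matrix (Fin n) (Fin n) ℝ) (hA : A.det ≠ 0) (hPP : IsPP A) :
    ∀ m < n, gE (ext0 A) m m m ≠ 0 := by
  intro m
  induction m using Nat.strong_induction_on with
  | _ m ih =>
  intro hm h0
  have hp : ∀ k < m, gE (ext0 A) k k k ≠ 0 := fun k hk => ih k hk (by omega)
  have hcol : ∀ i : Fin n, ∀ j < m + 1, gE (ext0 A) m i j = 0 := by
    intro i j hj
    by_cases h1 : (i : ℕ) < m ∨ j < m
    · exact gE_zero _ m hp _ _ h1
    have hj' : j = m := by omega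
    subst hj'
    have := hPP ⟨j, hm⟩ i (by show j ≤ (i : ℕ); omega)
    rw [geEntry_eq _ _ _ _ hp, geEntry_eq _ _ _ _ hp] at this
    simp only [h0, abs_zero] at this
    exact abs_nonpos_iff.mp this
  let W : Matrix (Fin (m + 1)) (Fin (m + 1)) ℝ := fun p q =>
    if (p : ℕ) < m then gE (ext0 A) p p q else 0
  have hW : W.det = 0 := Matrix.det_eq_zero_of_row_eq_zero (Fin.last m) (by intro j; simp [W])
  obtain ⟨w, hw0, hw⟩ := Matrix.exists_mulVec_eq_zero_iff.mpr hW
  apply hA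
  apply Matrix.exists_mulVec_eq_zero_iff.mp
  let w' : ℕ → ℝ := fun j => if h : j < m + 1 then w ⟨j, h⟩ else 0
  have hwj : ∀ j : Fin (m + 1), w' j = w j := fun j => by simp only [w', j.2, dif_pos]
  refine ⟨fun j => w' j, ?_, ?_⟩
  · intro hz
    apply hw0
    ext j
    have := congrFun hz ⟨j, by omega⟩
    rw [← hwj j]
    exact this
  · ext i
    have e1 : (A *ᵥ fun j : Fin n => w' j) i = ∑ j ∈ Finset.range n, ext0 A i j * w' j := by
      rw [Finset.sum_range]
      simp only [Matrix.mulVec, dotProduct, ext0_fin]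
    have e2 : ∑ j ∈ Finset.range n, ext0 A i j * w' j =
        ∑ j ∈ Finset.range (m + 1), ext0 A i j * w' j := by
      symm
      apply Finset.sum_subset
      · intro x; simp; omega
      · intro x _ hx
        simp at hx
        have : w' x = 0 := by simp [w']; omega
        rw [this, mul_zero]
    have e3 : ∀ k < m, ∑ j ∈ Finset.range (m + 1), gE (ext0 A) k k j * w' j = 0 := by
      intro k hk
      have := congrFun hw ⟨k, by omega⟩
      rw [Finset.sum_range]
      simp only [hwj]
      simpa [Matrix.mulVec, dotProduct, W, hk] using this
    rw [e1, e2]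
    have e4 : ∀ j ∈ Finset.range (m + 1), ext0 A i j * w' j =
        ∑ k ∈ Finset.range m, lf (ext0 A) i k * (gE (ext0 A) k k j * w' j) := by
      intro j hj
      rw [gE_tel (ext0 A) m i j, hcol i j (by simpa using hj), zero_add, Finset.sum_mul]
      simp only [mul_assoc]
    rw [Finset.sum_congr rfl e4, Finset.sum_comm]
    apply Finset.sum_eq_zero
    intro k hk
    rw [← Finset.mul_sum, e3 k (by simpa using hk), mul_zero]

lemma abs_le_maxAbs {n : ℕ} (A : Matrix (Fin n) (Fin n) ℝ) (i j : Fin n) :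
    |A i j| ≤ maxAbs A :=
  le_trans (le_ciSup (f := fun j => |A i j|) (Set.finite_range _).bddAbove j)
    (le_ciSup (f := fun i => ⨆ j, |A i j|) (Set.finite_range _).bddAbove i)

lemma exists_maxGE {n : ℕ} (hn : 0 < n) (A : Matrix (Fin n) (Fin n) ℝ) :
    ∃ k i j : Fin n, k ≤ i ∧ k ≤ j ∧ |geEntry A k i j| = maxGE A := by
  have : Nonempty (Fin n) := ⟨⟨0, hn⟩⟩
  obtain ⟨k, hk⟩ := exists_eq_ciSup_of_finite
    (f := fun k : Fin n => ⨆ i : {i : Fin n // k ≤ i}, ⨆ j : {j : Fin n // k ≤ j},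
    |geEntry A k i.1 j.1|)
  have : Nonempty {i : Fin n // k ≤ i} := ⟨⟨k, le_refl k⟩⟩
  obtain ⟨i, hi⟩ := exists_eq_ciSup_of_finite
    (f := fun i : {i : Fin n // k ≤ i} => ⨆ j : {j : Fin n // k ≤ j},
    |geEntry A k i.1 j.1|)
  obtain ⟨j, hj⟩ := exists_eq_ciSup_of_finite
    (f := fun j : {j : Fin n // k ≤ j} => |geEntry A k i.1 j.1|)
  refine ⟨k, i.1, j.1, i.2, j.2, ?_⟩
  rw [maxGE, ← hk, ← hi, ← hj]

lemma lf_le {n : ℕ} (A : Matrix (Fin n) (Fin n) ℝ) (hPP : IsPP A)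
    (hp : ∀ m < n, gE (ext0 A) m m m ≠ 0) (k i : ℕ) (hk : k ≤ i) (hi : i < n) :
    |lf (ext0 A) i k| ≤ 1 := by
  have := hPP ⟨k, by omega⟩ ⟨i, hi⟩ hk
  rw [geEntry_eq _ _ _ _ (fun m hm => hp m (by simp at hm; omega)),
    geEntry_eq _ _ _ _ (fun m hm => hp m (by simp at hm; omega))] at this
  rw [lf, abs_div]
  exact div_le_one_of_le₀ this (abs_nonneg _)

lemma gE_bound {n : ℕ} (A : Matrix (Fin n) (Fin n) ℝ) (hPP : IsPP A)
    (hp : ∀ m < n, gE (ext0 A) m m m ≠ 0) (k i j : ℕ) (hk : k ≤ i) (hi : i < n) (hj : j < n) :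
    |gE (ext0 A) k i j| ≤ 2 ^ k * maxAbs A := by
  induction k generalizing i with
  | zero =>
    simpa [gE, ext0_fin] using
      (by simpa [ext0, hi, hj] using abs_le_maxAbs A ⟨i, hi⟩ ⟨j, hj⟩ : |ext0 A i j| ≤ maxAbs A)
  | succ k ih =>
    have h1 := ih i (by omega) hi
    have h2 := ih k le_rfl (by omega)
    have h3 := lf_le A hPP hp k i (by omega) hi
    rw [gE_succ]
    calc _ ≤ |gE (ext0 A) k i j| + |lf (ext0 A) i k * gE (ext0 A) k k j| := abs_sub _ _
      _ = |gE (ext0 A) k i j| + |lf (ext0 A) i k| * |gE (ext0 A) k k j| := by rw [abs_mul]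
      _ ≤ 2 ^ k * maxAbs A + 1 * (2 ^ k * maxAbs A) := by
        gcongr
      _ = _ := by ring

lemma eq_case (x l y B : ℝ) (hB : 0 < B) (hx : |x| ≤ B) (hy : |y| ≤ B) (hl : |l| ≤ 1)
    (h : |x - l * y| = 2 * B) : |x| = B ∧ |y| = B ∧ l * y = -x := by
  have h1 : |l * y| ≤ |y| := by
    rw [abs_mul]; nlinarith [abs_nonneg y]
  have h2 := abs_sub x (l * y)
  have h3 : |x| = B := by linarith
  have h4 : |y| = B := by linarith
  have h5 : |l * y| = B := by linarith
  refine ⟨h3, h4, ?_⟩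
  rcases abs_cases x with ⟨a, _⟩ | ⟨a, _⟩ <;> rcases abs_cases (l * y) with ⟨b, _⟩ | ⟨b, _⟩ <;>
   rcases abs_cases (x - l * y) with ⟨c, _⟩ | ⟨c, _⟩ <;> linarith

lemma last_col {n : ℕ} (A : Matrix (Fin n) (Fin n) ℝ) (hPP : IsPP A)
    (hp : ∀ m < n, gE (ext0 A) m m m ≠ 0) (hM : 0 < maxAbs A)
    (hg : |gE (ext0 A) (n - 1) (n - 1) (n - 1)| = 2 ^ (n - 1) * maxAbs A) (hn : 0 < n)
    (d : ℕ) : ∀ k, k + d = n - 1 → (∀ i, k ≤ i → i < n →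
      |gE (ext0 A) k i (n - 1)| = 2 ^ k * maxAbs A) ∧
      (0 < d → ∀ i, k < i → i < n →
        lf (ext0 A) i k * gE (ext0 A) k k (n - 1) = - gE (ext0 A) k i (n - 1)) := by
  induction d with
  | zero =>
    intro k hk
    have hk : k = n - 1 := by omega
    subst hk
    refine ⟨fun i h1 h2 => ?_, fun h => absurd h (lt_irrefl _)⟩
    have : i = n - 1 := by omega
    rw [this, hg]
  | succ d ih =>
    intro k hk
    obtain ⟨h1, -⟩ := ih (k + 1) (by omega)
    have key : ∀ i, k < i → i < n → |gE (ext0 A) k i (n - 1)| = 2 ^ k * maxAbs A ∧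
        |gE (ext0 A) k k (n - 1)| = 2 ^ k * maxAbs A ∧
        lf (ext0 A) i k * gE (ext0 A) k k (n - 1) = - gE (ext0 A) k i (n - 1) := by
      intro i hki hi
      apply eq_case _ _ _ _ (by positivity)
      · exact gE_bound A hPP hp k i _ (by omega) hi (by omega)
      · exact gE_bound A hPP hp k k _ (by omega) (by omega) (by omega)
      · exact lf_le A hPP hp k i (by omega) hi
      · have := h1 i hki hi
        rw [gE_succ] at this
        rw [this]; ring
    refine ⟨fun i hki hi => ?_, fun _ i hki hi => (key i hki hi).2.2⟩
    rcases hki.lt_or_eq with h | h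
    · exact (key i h hi).1
    · subst h
      exact (key (n - 1) (by omega) (by omega)).2.1

/-- The lower factor of a maximal growth PP matrix is `D L_n D`. -/
lemma lu_struct {n : ℕ} (hn : 1 ≤ n) (A : Matrix (Fin n) (Fin n) ℝ) (hA : A.det ≠ 0)
    (hPP : IsPP A) (hρ : growth A = 2 ^ (n - 1)) :
    ∃ (s : Fin n → ℝ) (U : Matrix (Fin n) (Fin n) ℝ), (∀ i, s i = 1 ∨ s i = -1) ∧
      U.IsUpperTriangular ∧
      A = Matrix.diagonal s * Lmat n * U := by
  have hp := pivots_ne A hA hPP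
  have hM0 : maxAbs A ≠ 0 := by
    intro h
    rw [growth, h, div_zero] at hρ
    have : (0 : ℝ) < 2 ^ (n - 1) := by positivity
    linarith
  have hM : 0 < maxAbs A := lt_of_le_of_ne
    (le_trans (abs_nonneg _) (abs_le_maxAbs A ⟨0, by omega⟩ ⟨0, by omega⟩)) (Ne.symm hM0)
  have hGE : maxGE A = 2 ^ (n - 1) * maxAbs A := by
    rw [growth, div_eq_iff hM0] at hρ
    exact hρ
  obtain ⟨k, i, j, hki, hkj, hmax⟩ := exists_maxGE (by omega) A
  rw [hGE, geEntry_eq _ _ _ _ (fun m hm => hp m (by omega))] at hmax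
  have hb := gE_bound A hPP hp k i j hki i.2 j.2
  rw [hmax] at hb
  have hk : (k : ℕ) = n - 1 := by
    by_contra hne
    have hlt : (k : ℕ) < n - 1 := by omega
    have : (2 : ℝ) ^ (k : ℕ) < 2 ^ (n - 1) := pow_lt_pow_right₀ (by norm_num) hlt
    nlinarith
  have hi : (i : ℕ) = n - 1 := by have : (k : ℕ) ≤ i := hki; omega
  have hj : (j : ℕ) = n - 1 := by have : (k : ℕ) ≤ j := hkj; omega
  rw [hk, hi, hj] at hmax
  have hlc := fun k hk => last_col A hPP hp hM hmax (by omega) (n - 1 - k) k hk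
  set a := ext0 A with ha
  have hpow : ∀ k i, k ≤ i → i < n → gE a k i (n - 1) = 2 ^ k * a i (n - 1) := by
    intro k
    induction k with
    | zero => intro i _ _; simp [gE]
    | succ k ih =>
      intro i hki hi
      have := (hlc k (by omega)).2 (by omega) i (by omega) hi
      rw [gE_succ, this, ih i (by omega) hi]
      ring
  have habs : ∀ i, i < n → |a i (n - 1)| = maxAbs A := by
    intro i hi
    have := (hlc 0 (by omega)).1 i (by omega) hi
    simpa [gE] using this
  let s : ℕ → ℝ := fun i => a i (n - 1) / maxAbs A
  have hs : ∀ i, i < n → s i = 1 ∨ s i = -1 := by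
    intro i hi
    have h1 := habs i hi
    rcases abs_cases (a i (n - 1)) with ⟨h2, _⟩ | ⟨h2, _⟩
    · left; simp only [s]; rw [← h2, h1]; field_simp
    · right; simp only [s]
      have : a i (n - 1) = - maxAbs A := by linarith
      rw [this]; field_simp
  have hl : ∀ i k, k < i → i < n → lf a i k = - s i * s k := by
    intro i k hki hi
    have h1 := (hlc k (by omega)).2 (by omega) i (by omega) hi
    rw [hpow k k le_rfl (by omega), hpow k i (by omega) hi] at h1
    have e1 : ∀ i, a i (n - 1) = s i * maxAbs A := by
      intro i; simp only [s]; field_simp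
    rw [e1 i, e1 k] at h1
    have h2 : (2 : ℝ) ^ k * maxAbs A ≠ 0 := by positivity
    have h3 : lf a i k * s k = - s i := by
      apply mul_right_cancel₀ h2
      linarith
    have h4 : s k * s k = 1 := by
      rcases hs k (by omega) with h | h <;> rw [h] <;> norm_num
    calc lf a i k = lf a i k * s k * s k := by rw [mul_assoc, h4, mul_one]
      _ = _ := by rw [h3]
  refine ⟨fun i => s i, Matrix.of fun k j => s k * gE a k k j, fun i => hs i i.2, ?_, ?_⟩
  · intro k j hkj
    show s k * gE a k k j = 0
    rw [gE_zero a k (fun m hm => hp m (by omega)) k j (Or.inr hkj), mul_zero]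
  · ext i j
    rw [Matrix.mul_apply, ← ext0_fin A, ← ha, gE_tel a n i j,
      gE_zero a n hp i j (Or.inl i.2), zero_add, Finset.sum_range]
    apply Finset.sum_congr rfl
    intro k _
    rw [Matrix.diagonal_mul]
    have h4 : ∀ k : Fin n, s k * s k = 1 := by
      intro k
      rcases hs k k.2 with h | h <;> rw [h] <;> norm_num
    simp only [Lmat, Matrix.of_apply]
    rcases lt_trichotomy k i with h | h | h
    · rw [hl i k h i.2, if_neg (ne_of_gt h), if_pos h]
      ring
    · subst h
      rw [if_pos rfl]
      have : lf a k k = 1 := div_self (hp k k.2)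
      rw [this]
      linear_combination (-gE a k k j) * h4 k
    · rw [if_neg (ne_of_lt h), if_neg (not_lt_of_gt h)]
      have : lf a i k = 0 := by
        rw [lf, gE_zero a k (fun m hm => hp m (by omega)) i k (Or.inl h), zero_div]
      rw [this]; ring

/-- ℕ-indexed version of `Qhat`. -/
noncomputable def qf (n i j : ℕ) : ℝ :=
    if j = n - 1 then
      if i = n - 1 then 1 else 2 ^ (n - 2 - i)
    else if j = n - 2 then
      if i = n - 2 then 1 else if i = n - 1 then -1 else 0
    else if i < j then
      -((n : ℝ) - j - 2) * 2 ^ (j - i - 1)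
    else if i = j then
      ((n : ℝ) - j - 1) * (alpha (j + 1) - 1) + 1
    else -alpha (j + 1)

lemma Qhat_eq (n : ℕ) (i j : Fin n) : Qhat n i j = qf n i j := rfl

lemma alpha_succ (j : ℕ) : alpha (j + 1) = 1 + 2 / 3 * (4 ^ j - 1) := by
  simp [alpha]

lemma geo_sum (j : ℕ) : ∑ k ∈ Finset.range j, ((2 : ℝ) ^ (j - k - 1)) ^ 2 = (4 ^ j - 1) / 3 := by
  induction j with
  | zero => simp
  | succ j ih =>
    rw [Finset.sum_range_succ']
    simp only [Nat.add_sub_add_right, ih]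
    have : (2 : ℝ) ^ j * 2 ^ j = 4 ^ j := by rw [← mul_pow]; norm_num
    simp only [Nat.sub_zero, Nat.add_sub_cancel]
    rw [pow_succ (4 : ℝ)]
    linear_combination this

lemma split3 (f : ℕ → ℝ) (n j : ℕ) (hj : j < n) :
    ∑ k ∈ Finset.range n, f k =
      ∑ k ∈ Finset.range j, f k + f j + ∑ k ∈ Finset.Ico (j + 1) n, f k := by
  rw [Finset.range_eq_Ico, ← Finset.sum_Ico_consecutive f (Nat.zero_le j) hj.le,
    Finset.sum_eq_sum_Ico_succ_bot hj, Finset.range_eq_Ico]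
  ring

lemma qf_half (n i j : ℕ) (hij : i + 1 < j) (hj : j < n) :
    qf n i j = 2 * qf n (i + 1) j := by
  unfold qf
  by_cases h1 : j = n - 1
  · rw [if_pos h1, if_pos h1, if_neg (by omega), if_neg (by omega)]
    have : n - 2 - i = (n - 2 - (i + 1)) + 1 := by omega
    rw [this, pow_succ]; ring
  rw [if_neg h1, if_neg h1]
  by_cases h2 : j = n - 2
  · rw [if_pos h2, if_pos h2, if_neg (by omega), if_neg (by omega), if_neg (by omega),
      if_neg (by omega)]
    ring
  rw [if_neg h2, if_neg h2, if_pos (by omega), if_pos (by omega)]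
  have : j - i - 1 = (j - (i + 1) - 1) + 1 := by omega
  rw [this, pow_succ]; ring

lemma qf_pow (n d : ℕ) : ∀ i j, i + d < j → j < n → qf n i j = 2 ^ d * qf n (i + d) j := by
  induction d with
  | zero => intro i j _ _; simp
  | succ d ih =>
    intro i j h1 h2
    rw [ih i j (by omega) h2, qf_half n (i + d) j (by omega) h2, pow_succ]
    have : i + d + 1 = i + (d + 1) := by omega
    rw [this]; ring

lemma qf_below (n i j : ℕ) (hj : j + 2 < n) (hi : j < i) : qf n i j = -alpha (j + 1) := by
  unfold qf
  rw [if_neg (by omega), if_neg (by omega), if_neg (by omega), if_neg (by omega)]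

lemma qf_diag (n j : ℕ) (hj : j + 2 < n) :
    qf n j j = ((n : ℝ) - j - 1) * (alpha (j + 1) - 1) + 1 := by
  unfold qf
  rw [if_neg (by omega), if_neg (by omega), if_neg (by omega), if_pos rfl]

lemma qf_above (n i j : ℕ) (hj : j + 2 < n) (hi : i < j) :
    qf n i j = -((n : ℝ) - j - 2) * 2 ^ (j - i - 1) := by
  unfold qf
  rw [if_neg (by omega), if_neg (by omega), if_pos hi]

/-- Column `j` of `Qhat` is orthogonal to columns `i < j` of `L_n`. -/
lemma qf_tail (n j : ℕ) (hj : j < n) (hn : 2 ≤ n) (d : ℕ) : ∀ i, i + d + 1 = j →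
    ∑ k ∈ Finset.Ico (i + 1) n, qf n k j = qf n i j := by
  induction d with
  | zero =>
    intro i hi
    have hi : i + 1 = j := by omega
    rw [hi, Finset.sum_eq_sum_Ico_succ_bot hj]
    by_cases h1 : j = n - 1
    · subst h1
      have : Finset.Ico (n - 1 + 1) n = ∅ := by apply Finset.Ico_eq_empty; omega
      rw [this, Finset.sum_empty]
      unfold qf
      rw [if_pos rfl, if_pos rfl, if_pos rfl, if_neg (by omega)]
      have : n - 2 - i = 0 := by omega
      rw [this]; norm_num
    by_cases h2 : j = n - 2
    · subst h2
      have : Finset.Ico (n - 2 + 1) n = {n - 1} := by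
        ext x; simp; omega
      rw [this, Finset.sum_singleton]
      unfold qf
      have a1 : ¬ n - 1 = n - 2 := by omega
      have a2 : ¬ i = n - 2 := by omega
      have a3 : ¬ i = n - 1 := by omega
      simp [h1, a1, a2, a3]
    have h3 : j + 2 < n := by omega
    rw [Finset.sum_congr rfl (fun k hk => qf_below n k j h3
      (by simp at hk; omega)), Finset.sum_const, Nat.card_Ico, nsmul_eq_mul,
      Nat.cast_sub (by omega), qf_diag n j h3, qf_above n i j h3 (by omega)]
    have : j - i - 1 = 0 := by omega
    rw [this]; push_cast; ring
  | succ d ih =>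
    intro i hi
    rw [Finset.sum_eq_sum_Ico_succ_bot (by omega), ih (i + 1) (by omega),
      qf_half n i j (by omega) hj]
    ring

lemma qf_orth (n i j : ℕ) (hij : i < j) (hj : j < n) (hn : 2 ≤ n) :
    ∑ k ∈ Finset.range n, qf n k i * qf n k j = 0 := by
  have ht := qf_tail n j hj hn (j - i - 1) i (by omega)
  rw [split3 _ n i (by omega)]
  by_cases h1 : i + 2 < n
  · have e1 : ∀ k ∈ Finset.Ico (i + 1) n, qf n k i * qf n k j = -alpha (i + 1) * qf n k j := by
      intro k hk
      rw [qf_below n k i h1 (by simp at hk; omega)]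
    have e2 : ∀ k ∈ Finset.range i, qf n k i * qf n k j =
        (-((n : ℝ) - i - 2) * 2 * qf n i j) * (2 ^ (i - k - 1)) ^ 2 := by
      intro k hk
      simp at hk
      rw [qf_above n k i h1 hk]
      have h2 := qf_pow n (i - k) k j (by omega) hj
      have h3 : k + (i - k) = i := by omega
      rw [h3] at h2
      have h4 : i - k = (i - k - 1) + 1 := by omega
      rw [h2, h4, pow_succ, Nat.add_sub_cancel]; ring
    rw [Finset.sum_congr rfl e1, Finset.sum_congr rfl e2, ← Finset.mul_sum, ← Finset.mul_sum,
      ht, geo_sum, qf_diag n i h1, alpha_succ]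
    ring
  · have hi : i = n - 2 := by omega
    have hj' : j = n - 1 := by omega
    have e1 : ∀ k ∈ Finset.Ico (i + 1) n, qf n k i * qf n k j = -qf n k j := by
      intro k hk
      simp at hk
      have : qf n k i = -1 := by
        unfold qf
        rw [if_neg (by omega), if_pos hi, if_neg (by omega), if_pos (by omega)]
      rw [this]; ring
    have e2 : ∀ k ∈ Finset.range i, qf n k i * qf n k j = 0 := by
      intro k hk
      simp at hk
      have : qf n k i = 0 := by
        unfold qf
        rw [if_neg (by omega), if_pos hi, if_neg (by omega), if_neg (by omega)]
      rw [this]; ring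
    have e3 : qf n i i = 1 := by
      unfold qf
      rw [if_neg (by omega), if_pos hi, if_pos hi]
    rw [Finset.sum_congr rfl e1, Finset.sum_congr rfl e2, Finset.sum_neg_distrib, ht, e3]
    simp

/-- ℕ-indexed version of the diagonal of `Dhat`. -/
noncomputable def df (n j : ℕ) : ℝ :=
    if j = 0 then (n : ℝ)
    else if j = n - 2 then 2
    else if j = n - 1 then 2 * alpha (n - 1)
    else ((n : ℝ) - j - 1) ^ 2 * (alpha (j + 1) - 1) ^ 2 *
        (2 * alpha (j + 1) - 1) / (2 * alpha (j + 1) - 2) +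
      ((n : ℝ) - j - 1) * (alpha (j + 1) ^ 2 + alpha (j + 1) - 1) +
      2 * alpha j

lemma Dhat_eq (n : ℕ) (j : Fin n) : Dhat n j j = df n j := by
  rw [Dhat, Matrix.diagonal_apply_eq]; rfl

lemma qf_norm (n j : ℕ) (hj : j < n) (hn : 3 ≤ n) :
    ∑ k ∈ Finset.range n, qf n k j * qf n k j = df n j := by
  rw [split3 _ n j hj]
  by_cases h1 : j + 2 < n
  · have e1 : ∀ k ∈ Finset.Ico (j + 1) n, qf n k j * qf n k j = alpha (j + 1) ^ 2 := by
      intro k hk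
      rw [qf_below n k j h1 (by simp at hk; omega)]; ring
    have e2 : ∀ k ∈ Finset.range j, qf n k j * qf n k j =
        ((n : ℝ) - j - 2) ^ 2 * (2 ^ (j - k - 1)) ^ 2 := by
      intro k hk
      rw [qf_above n k j h1 (by simpa using hk)]; ring
    rw [Finset.sum_congr rfl e1, Finset.sum_congr rfl e2, ← Finset.mul_sum, geo_sum,
      Finset.sum_const, Nat.card_Ico, nsmul_eq_mul, Nat.cast_sub (by omega), qf_diag n j h1]
    unfold df
    rcases Nat.eq_zero_or_pos j with h0 | h0
    · subst h0
      rw [if_pos rfl, alpha_succ]; push_cast; ring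
    · rw [if_neg (by omega), if_neg (by omega), if_neg (by omega)]
      obtain ⟨m, rfl⟩ : ∃ m, j = m + 1 := ⟨j - 1, by omega⟩
      have hx : (1 : ℝ) ≤ 4 ^ m := one_le_pow₀ (by norm_num)
      rw [alpha_succ, alpha_succ, pow_succ (4 : ℝ)]
      generalize (4 : ℝ) ^ m = x at hx
      push_cast
      have hd : 2 * (1 + 2 / 3 * (x * 4 - 1)) - 2 ≠ 0 := by
        intro h; linarith
      field_simp
      have hd' : x * 4 - 1 ≠ 0 := by
        intro h; linarith
      ring_nf
  by_cases h2 : j = n - 2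
  · have e1 : ∀ k ∈ Finset.Ico (j + 1) n, qf n k j * qf n k j = 1 := by
      intro k hk
      simp at hk
      have : qf n k j = -1 := by
        unfold qf
        rw [if_neg (by omega), if_pos h2, if_neg (by omega), if_pos (by omega)]
      rw [this]; ring
    have e2 : ∀ k ∈ Finset.range j, qf n k j * qf n k j = 0 := by
      intro k hk
      simp at hk
      have : qf n k j = 0 := by
        unfold qf
        rw [if_neg (by omega), if_pos h2, if_neg (by omega), if_neg (by omega)]
      rw [this]; ring
    have e3 : qf n j j = 1 := by
      unfold qf
      rw [if_neg (by omega), if_pos h2, if_pos h2]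
    have e4 : n - (j + 1) = 1 := by omega
    rw [Finset.sum_congr rfl e1, Finset.sum_congr rfl e2, e3, Finset.sum_const_zero,
      Finset.sum_const, Nat.card_Ico, e4]
    unfold df
    rw [if_neg (by omega), if_pos h2]
    norm_num
  · have h3 : j = n - 1 := by omega
    have e1 : Finset.Ico (j + 1) n = ∅ := by apply Finset.Ico_eq_empty; omega
    have e2 : ∀ k ∈ Finset.range j, qf n k j * qf n k j = (2 ^ (j - k - 1)) ^ 2 := by
      intro k hk
      simp at hk
      have : n - 2 - k = j - k - 1 := by omega
      unfold qf
      rw [if_pos h3, if_neg (by omega), this]; ring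
    have e3 : qf n j j = 1 := by
      unfold qf
      rw [if_pos h3, if_pos h3]
    rw [e1, Finset.sum_empty, Finset.sum_congr rfl e2, geo_sum, e3]
    unfold df
    rw [if_neg (by omega), if_neg (by omega), if_pos h3]
    obtain ⟨m, hm⟩ : ∃ m, n - 1 = m + 1 := ⟨n - 2, by omega⟩
    rw [h3, hm, alpha_succ, pow_succ]
    ring

lemma df_pos (n j : ℕ) (hj : j < n) (hn : 3 ≤ n) : 0 < df n j := by
  rw [← qf_norm n j hj hn]
  have hne : ∃ k < n, qf n k j ≠ 0 := by
    by_cases h1 : j + 2 < n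
    · refine ⟨j + 1, by omega, ?_⟩
      rw [qf_below n _ j h1 (by omega), alpha_succ]
      have hx : (1 : ℝ) ≤ 4 ^ j := one_le_pow₀ (by norm_num)
      intro h; linarith
    · refine ⟨j, hj, ?_⟩
      unfold qf
      by_cases h2 : j = n - 1
      · rw [if_pos h2, if_pos h2]; norm_num
      · rw [if_neg h2, if_pos (by omega), if_pos (by omega)]; norm_num
  obtain ⟨k, hk, hk0⟩ := hne
  apply Finset.sum_pos' (fun i _ => mul_self_nonneg _)
  exact ⟨k, by simpa using hk, mul_self_pos.mpr hk0⟩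

lemma Qmat_apply (n : ℕ) (i j : Fin n) : Qmat n i j = qf n i j * (Real.sqrt (df n j))⁻¹ := by
  rw [Qmat, Matrix.mul_diagonal, Qhat_eq, Dhat_eq]

lemma Qmat_orth (n : ℕ) (hn : 3 ≤ n) : (Qmat n)ᵀ * Qmat n = 1 := by
  ext i j
  rw [Matrix.mul_apply]
  have e : ∀ k : Fin n, (Qmat n)ᵀ i k * Qmat n k j =
      (Real.sqrt (df n i))⁻¹ * (Real.sqrt (df n j))⁻¹ * (qf n k i * qf n k j) := by
    intro k
    rw [Matrix.transpose_apply, Qmat_apply, Qmat_apply]; ring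
  rw [Finset.sum_congr rfl (fun k _ => e k), ← Finset.mul_sum,
    ← Finset.sum_range (fun k => qf n k i * qf n k j)]
  rcases lt_trichotomy (i : ℕ) j with h | h | h
  · rw [qf_orth n i j h j.2 (by omega), Matrix.one_apply_ne (by intro h'; subst h'; omega),
      mul_zero]
  · have : i = j := Fin.ext h
    subst this
    rw [qf_norm n i i.2 hn, Matrix.one_apply_eq]
    have := df_pos n i i.2 hn
    have h2 := Real.mul_self_sqrt this.le
    have h3 : Real.sqrt (df n i) ≠ 0 := by positivity
    rw [← mul_inv, h2, inv_mul_cancel₀ this.ne']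
  · simp only [mul_comm (qf n _ i)]
    rw [qf_orth n j i h i.2 (by omega), Matrix.one_apply_ne (by intro h'; subst h'; omega),
      mul_zero]

lemma Qmat_L (n : ℕ) (hn : 3 ≤ n) : ((Qmat n)ᵀ * Lmat n).IsUpperTriangular := by
  intro j i hij
  have hij : (i : ℕ) < j := hij
  rw [Matrix.mul_apply]
  have e : ∀ k : Fin n, (Qmat n)ᵀ j k * Lmat n k i =
      (Real.sqrt (df n j))⁻¹ *
      (qf n k j * (if (k : ℕ) = i then 1 else if (i : ℕ) < k then -1 else 0)) := by
    intro k
    rw [Matrix.transpose_apply, Qmat_apply]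
    simp only [Lmat, Fin.ext_iff, Fin.lt_def]
    ring
  rw [Finset.sum_congr rfl (fun k _ => e k), ← Finset.mul_sum,
    ← Finset.sum_range (fun k => qf n k j *
      (if (k : ℕ) = i then (1 : ℝ) else if (i : ℕ) < k then -1 else 0)),
    split3 _ n i i.2]
  have e1 : ∀ k ∈ Finset.Ico ((i : ℕ) + 1) n, qf n k j *
      (if (k : ℕ) = i then (1 : ℝ) else if (i : ℕ) < k then -1 else 0) = -qf n k j := by
    intro k hk
    simp at hk
    rw [if_neg (by omega), if_pos (by omega)]; ring
  have e2 : ∀ k ∈ Finset.range (i : ℕ), qf n k j *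
      (if (k : ℕ) = i then (1 : ℝ) else if (i : ℕ) < k then -1 else 0) = 0 := by
    intro k hk
    simp only [Finset.mem_range] at hk
    rw [if_neg (by omega), if_neg (by omega)]; ring
  rw [Finset.sum_congr rfl e1, Finset.sum_congr rfl e2, Finset.sum_neg_distrib,
    qf_tail n j j.2 (by omega) ((j : ℕ) - i - 1) i (by omega), if_pos rfl]
  simp

lemma growth_sign {n : ℕ} (M : Matrix (Fin n) (Fin n) ℝ) (s t : Fin n → ℝ)
    (hs : ∀ i, s i = 1 ∨ s i = -1) (ht : ∀ i, t i = 1 ∨ t i = -1) :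
    growth (Matrix.diagonal s * M * Matrix.diagonal t) = growth M := by
  have hsa : ∀ i, |s i| = 1 := by
    intro i; rcases hs i with h | h <;> rw [h] <;> norm_num
  have hta : ∀ i, |t i| = 1 := by
    intro i; rcases ht i with h | h <;> rw [h] <;> norm_num
  have hss : ∀ i, s i * s i = 1 := by
    intro i; rcases hs i with h | h <;> rw [h] <;> norm_num
  have htt : ∀ i, t i * t i = 1 := by
    intro i; rcases ht i with h | h <;> rw [h] <;> norm_num
  have happ : ∀ i j, (Matrix.diagonal s * M * Matrix.diagonal t) i j = s i * M i j * t j := by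
    intro i j
    rw [Matrix.mul_diagonal, Matrix.diagonal_mul]
  have hge : ∀ k i j, geEntry (Matrix.diagonal s * M * Matrix.diagonal t) k i j =
      s i * geEntry M k i j * t j := by
    intro k i j
    let c : Fin k.val → Fin n := Fin.castLE k.isLt.le
    have hsub : (Matrix.diagonal s * M * Matrix.diagonal t).submatrix c c =
        Matrix.diagonal (fun p => s (c p)) * M.submatrix c c *
          Matrix.diagonal (fun p => t (c p)) := by
      ext p q
      rw [Matrix.submatrix_apply, happ, Matrix.mul_diagonal, Matrix.diagonal_mul,
        Matrix.submatrix_apply]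
    have hd : ∀ u : Fin n → ℝ, (∀ i, u i * u i = 1) →
        (Matrix.diagonal (fun p => u (c p)))⁻¹ = Matrix.diagonal (fun p => u (c p)) := by
      intro u hu
      apply Matrix.inv_eq_right_inv
      rw [Matrix.diagonal_mul_diagonal]
      simp [hu]
    have hinv : ∀ a b, ((Matrix.diagonal s * M * Matrix.diagonal t).submatrix c c)⁻¹ a b =
        t (c a) * (M.submatrix c c)⁻¹ a b * s (c b) := by
      intro a b
      rw [hsub, Matrix.mul_inv_rev, Matrix.mul_inv_rev, hd s hss, hd t htt,
        Matrix.diagonal_mul, Matrix.mul_diagonal]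
      ring
    have e : ∀ a b : Fin k.val, (Matrix.diagonal s * M * Matrix.diagonal t) i (c a) *
        ((Matrix.diagonal s * M * Matrix.diagonal t).submatrix c c)⁻¹ a b *
        (Matrix.diagonal s * M * Matrix.diagonal t) (c b) j =
        s i * t j * (M i (c a) * (M.submatrix c c)⁻¹ a b * M (c b) j) := by
      intro a b
      rw [hinv, happ, happ]
      linear_combination (s i * t j * (M i (c a) * (M.submatrix c c)⁻¹ a b * M (c b) j)) *
        ((s (c b) * s (c b)) * htt (c a) + hss (c b))
    unfold geEntry
    rw [Finset.sum_congr rfl (fun a _ => Finset.sum_congr rfl (fun b _ => e a b)), happ]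
    simp only [← Finset.mul_sum]
    ring
  unfold growth maxGE maxAbs
  simp only [hge, happ, abs_mul, hsa, hta, one_mul, mul_one]

/-- if `A` (with `n ≥ 3`) is PP with maximal growth `ρ(A) = 2^{n-1}` and
`A = QR` is its QR factorization (`R` upper triangular with positive diagonal), then
`Q = D Q_n D̃` for some diagonal sign matrices `D, D̃`, and `ρ(Q) = ρ(Q_n)`. -/
theorem max_growth_orthogonal_factor (n : ℕ) (hn : 3 ≤ n)
    (A Q R : Matrix (Fin n) (Fin n) ℝ)
    (hPP : IsPP A) (hρ : growth A = 2 ^ (n - 1))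
    (hQR : A = Q * R) (hQ : Qᵀ * Q = 1)
    (hRu : ∀ i j : Fin n, j < i → R i j = 0) (hRd : ∀ i : Fin n, 0 < R i i) :
    (∃ D Dt : Matrix (Fin n) (Fin n) ℝ,
      IsSignDiag D ∧ IsSignDiag Dt ∧ Q = D * Qmat n * Dt) ∧
    growth Q = growth (Qmat n) := by
  have hQdet : Q.det ≠ 0 := by
    intro h
    have := congrArg Matrix.det hQ
    rw [Matrix.det_mul, h, mul_zero, Matrix.det_one] at this
    exact zero_ne_one this
  have hRU : R.IsUpperTriangular := fun i j h => hRu i j h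
  have hRdet : R.det ≠ 0 := by
    rw [Matrix.det_of_isUpperTriangular hRU, Finset.prod_ne_zero_iff]
    intro i _
    exact (hRd i).ne'
  have hAdet : A.det ≠ 0 := by
    rw [hQR, Matrix.det_mul]
    exact mul_ne_zero hQdet hRdet
  obtain ⟨s, U, hs, hU, hAU⟩ := lu_struct (by omega) A hAdet hPP hρ
  have hss : Matrix.diagonal s * Matrix.diagonal s = 1 := by
    rw [Matrix.diagonal_mul_diagonal, ← Matrix.diagonal_one]
    congr 1
    ext i
    rcases hs i with h | h <;> rw [h] <;> norm_num
  have hO := Qmat_orth n hn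
  have hO' : Qmat n * (Qmat n)ᵀ = 1 := mul_eq_one_comm.mp hO
  set S := (Qmat n)ᵀ * Matrix.diagonal s * Q with hS
  have hQS : Q = Matrix.diagonal s * Qmat n * S := by
    calc Q = Matrix.diagonal s * (Qmat n * (Qmat n)ᵀ) * Matrix.diagonal s * Q := by
          rw [hO', Matrix.mul_one, hss, Matrix.one_mul]
      _ = _ := by simp only [hS, Matrix.mul_assoc]
  have hSR : (S * R).IsUpperTriangular := by
    have : S * R = (Qmat n)ᵀ * Lmat n * U := by
      calc S * R = (Qmat n)ᵀ * Matrix.diagonal s * (Q * R) := by simp only [hS, Matrix.mul_assoc]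
        _ = (Qmat n)ᵀ * (Matrix.diagonal s * Matrix.diagonal s) * Lmat n * U := by
          rw [← hQR, hAU]; simp only [Matrix.mul_assoc]
        _ = _ := by rw [hss, Matrix.mul_one]
    rw [this]
    exact (Qmat_L n hn).mul hU
  have hSU : S.IsUpperTriangular := by
    letI := Matrix.invertibleOfIsUnitDet R (isUnit_iff_ne_zero.mpr hRdet)
    have h1 := hSR.mul (Matrix.blockTriangular_inv_of_blockTriangular hRU)
    rwa [Matrix.mul_assoc, Matrix.mul_nonsing_inv _ (isUnit_iff_ne_zero.mpr hRdet),
      Matrix.mul_one] at h1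
  have hSO : Sᵀ * S = 1 := by
    calc Sᵀ * S = Qᵀ * (Matrix.diagonal s * (Qmat n * (Qmat n)ᵀ) * Matrix.diagonal s) * Q := by
          simp only [hS, Matrix.transpose_mul, Matrix.transpose_transpose,
            Matrix.diagonal_transpose, Matrix.mul_assoc]
      _ = 1 := by rw [hO', Matrix.mul_one, hss, Matrix.mul_one, hQ]
  have hSlow : Sᵀ.IsUpperTriangular := by
    letI := Matrix.invertibleOfIsUnitDet S (Matrix.isUnit_det_of_left_inverse hSO)
    have h1 := Matrix.blockTriangular_inv_of_blockTriangular hSU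
    rwa [Matrix.inv_eq_left_inv hSO] at h1
  have hSd : S = Matrix.diagonal (fun i => S i i) := by
    ext i j
    rcases lt_trichotomy i j with h | h | h
    · rw [Matrix.diagonal_apply_ne _ h.ne]
      exact hSlow h
    · subst h; rw [Matrix.diagonal_apply_eq]
    · rw [Matrix.diagonal_apply_ne _ h.ne']
      exact hSU h
  have hSs : ∀ i, S i i = 1 ∨ S i i = -1 := by
    intro i
    rw [hSd, Matrix.diagonal_transpose, Matrix.diagonal_mul_diagonal] at hSO
    have := congrFun (congrFun hSO i) i
    rw [Matrix.diagonal_apply_eq, Matrix.one_apply_eq] at this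
    exact mul_self_eq_one_iff.mp this
  refine ⟨⟨Matrix.diagonal s, S, ⟨fun i j h => Matrix.diagonal_apply_ne _ h, fun i => ?_⟩,
    ⟨fun i j h => ?_, hSs⟩, hQS⟩, ?_⟩
  · rw [Matrix.diagonal_apply_eq]; exact hs i
  · rw [hSd]; exact Matrix.diagonal_apply_ne _ h
  · rw [hQS, hSd]
    exact growth_sign _ _ _ hs hSs
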